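/- For every spider T on n vertices with exactly 3 legs, h(T) ≥ 5n/12 − 1. (The paper states h(T) ≥ 5n/12 with floors and ceilings omitted.) -/

import Mathlib

open Finset

/-- The multiset of pairwise distances between distinct vertices of `S` in `G`
(one entry for each unordered pair of distinct vertices of `S`). -/
noncomputable def distMultiset {V : Type*} (G : SimpleGraph V) (S : Finset V) : Multiset ℕ :=
  letI := Classical.decEq V
  (S.sym2.filter fun p => ¬ p.IsDiag).val.map
    (Sym2.lift ⟨fun a b => G.dist a b, fun _ _ => SimpleGraph.dist_comm⟩)

/-- Two disjoint vertex sets are homometric if their distance multisets coincide. -/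
def Homometric {V : Type*} (G : SimpleGraph V) (S₁ S₂ : Finset V) : Prop :=
  Disjoint S₁ S₂ ∧ distMultiset G S₁ = distMultiset G S₂

/-- `h(G)`: the largest `h` such that `G` contains two disjoint homometric sets of
size `h` each. -/
noncomputable def homNumber {V : Type*} (G : SimpleGraph V) : ℕ :=
  sSup {h : ℕ | ∃ S₁ S₂ : Finset V, Homometric G S₁ S₂ ∧ S₁.card = h ∧ S₂.card = h}

/-- A spider with head `v` and `k` legs: a tree in which `v` has degree `k` and every
other vertex has degree at most `2`.  (The components of `T − v` are then exactly `k`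
vertex-disjoint paths, each joined to `v` by one edge at an endpoint.) -/
def IsSpider {V : Type*} [Fintype V] (G : SimpleGraph V) [DecidableRel G.Adj]
    (v : V) (k : ℕ) : Prop :=
  G.IsTree ∧ G.degree v = k ∧ ∀ u, u ≠ v → G.degree u ≤ 2

/-! Two constructions give large homometric pairs. Cutting the path formed by two legs into halves
misses, up to a bounded error, only the third leg. If two legs differ in length by `d`, then one of
them, together with alternate blocks of length `d` of the third leg, can be slid by `d` through the
head; up to a bounded error this misses only `d` vertices. With `c` the length of the shortest leg
and `d` the smaller gap between consecutive leg lengths, the legs have at least `c`, `c + d` and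
`c + 2d` vertices, so `c + d ≤ n / 3`, and the better construction misses at most about `n / 6`
vertices. -/

section Homometric

variable {V α : Type*} {G : SimpleGraph V}

lemma distMultiset_map [DecidableEq α] (G : SimpleGraph V) (X : Finset α) (f : α ↪ V) :
    distMultiset G (X.map f) =
      {p ∈ X.sym2 | ¬ p.IsDiag}.val.map
        (Sym2.lift ⟨fun a b ↦ G.dist (f a) (f b), fun _ _ ↦ SimpleGraph.dist_comm⟩) := by
  classical
  have hpairs : {p ∈ (X.map f).sym2 | ¬ p.IsDiag} =
      {p ∈ X.sym2 | ¬ p.IsDiag}.map f.sym2Map := by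
    rw [sym2_map, filter_map]
    congr 1
    exact filter_congr fun p _ ↦ not_congr (Sym2.isDiag_map f.injective)
  calc distMultiset G (X.map f)
      = {p ∈ (X.map f).sym2 | ¬ p.IsDiag}.val.map
          (Sym2.lift ⟨fun a b ↦ G.dist a b, fun _ _ ↦ SimpleGraph.dist_comm⟩) := by
        unfold distMultiset
        congr!
    _ = _ := by
        rw [hpairs, map_val, Multiset.map_map]
        refine Multiset.map_congr rfl fun p _ ↦ ?_
        induction p with | _ a b => rfl

lemma card_le_homNumber [Finite V] {X : Finset α} {f g : α → V} (hf : Set.InjOn f X)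
    (hg : Set.InjOn g X) (hdist : ∀ x ∈ X, ∀ y ∈ X, G.dist (f x) (f y) = G.dist (g x) (g y))
    (hne : ∀ x ∈ X, ∀ y ∈ X, f x ≠ g y) : #X ≤ homNumber G := by
  classical
  have hbdd : BddAbove {h : ℕ | ∃ S₁ S₂ : Finset V, Homometric G S₁ S₂ ∧ #S₁ = h ∧ #S₂ = h} := by
    refine ⟨Nat.card V, ?_⟩
    rintro _ ⟨S, _, _, rfl, _⟩
    have := Fintype.ofFinite V
    exact Nat.card_eq_fintype_card (α := V) ▸ card_le_univ S
  let f' : X ↪ V := ⟨fun x ↦ f x, hf.injective⟩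
  let g' : X ↪ V := ⟨fun x ↦ g x, hg.injective⟩
  refine le_csSup hbdd ⟨univ.map f', univ.map g', ⟨?_, ?_⟩, by simp, by simp⟩
  · simp only [disjoint_left, mem_map, mem_univ, true_and]
    rintro _ ⟨x, rfl⟩ ⟨y, hy⟩
    exact hne x x.2 y y.2 hy.symm
  · rw [distMultiset_map, distMultiset_map]
    congr 2
    ext x y
    exact hdist x x.2 y y.2

end Homometric

/-- `p` is a geodesic, indexed by the integers in `s`: distances along it are differences of
indices. -/
def IsGeodesicOn {V : Type*} (G : SimpleGraph V) (p : ℤ → V) (s : Set ℤ) : Prop :=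
  ∀ x ∈ s, ∀ y ∈ s, (G.dist (p x) (p y) : ℤ) = |x - y|

namespace IsGeodesicOn

variable {V : Type*} {G : SimpleGraph V} {p q : ℤ → V} {s t : Set ℤ}

lemma mono (hp : IsGeodesicOn G p t) (hst : s ⊆ t) : IsGeodesicOn G p s :=
  fun x hx y hy ↦ hp x (hst hx) y (hst hy)

lemma comp_add_right (hp : IsGeodesicOn G p s) (d : ℤ) :
    IsGeodesicOn G (fun x ↦ p (x + d)) ((· + d) ⁻¹' s) := fun x hx y hy ↦ by
  rw [hp _ hx _ hy, add_sub_add_right_eq_sub]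

lemma injOn (hp : IsGeodesicOn G p s) : Set.InjOn p s := fun x hx y hy hxy ↦ by
  have h := hp x hx y hy
  rw [hxy, SimpleGraph.dist_self, Nat.cast_zero, eq_comm, abs_eq_zero] at h
  exact sub_eq_zero.1 h

lemma card_le_homNumber [Finite V] {X : Finset ℤ} (hp : IsGeodesicOn G p X)
    (hq : IsGeodesicOn G q X) (hne : ∀ x ∈ X, ∀ y ∈ X, p x ≠ q y) : #X ≤ homNumber G :=
  _root_.card_le_homNumber hp.injOn hq.injOn
    (fun x hx y hy ↦ by exact_mod_cast (hp x hx y hy).trans (hq x hx y hy).symm) hne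

lemma sub_le_two_mul_homNumber [Finite V] {a b : ℤ} (hp : IsGeodesicOn G p (Set.Icc a b)) :
    b - a ≤ 2 * homNumber G := by
  set m := (b - a + 1) / 2
  have hX : ∀ x ∈ Ico a (a + m), x ∈ Set.Icc a b ∧ x + m ∈ Set.Icc a b := by
    simp only [mem_Ico, Set.mem_Icc]
    omega
  have hcard : #(Ico a (a + m)) ≤ homNumber G := by
    refine card_le_homNumber (hp.mono fun x hx ↦ (hX x hx).1)
      ((hp.comp_add_right m).mono fun x hx ↦ (hX x hx).2) fun x hx y hy hxy ↦ ?_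
    have := hp.injOn (hX x hx).1 (hX y hy).2 hxy
    rw [mem_Ico] at hx hy
    omega
  rw [Int.card_Ico] at hcard
  omega

end IsGeodesicOn

section Branch

variable {V : Type*} {G : SimpleGraph V} {u v w w' x y : V}

lemma exists_dist_eq_and_dist_add_dist_eq (hG : G.Connected) {k : ℕ} (hk : k ≤ G.dist u v) :
    ∃ x, G.dist u x = k ∧ G.dist u x + G.dist x v = G.dist u v := by
  obtain ⟨p, hp⟩ := hG.exists_walk_length_eq_dist u v
  have htake := SimpleGraph.dist_le (p.take k)
  have hdrop := SimpleGraph.dist_le (p.drop k)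
  have htri := hG.dist_triangle (u := u) (v := p.getVert k) (w := v)
  rw [SimpleGraph.Walk.take_length] at htake
  rw [SimpleGraph.Walk.drop_length] at hdrop
  exact ⟨p.getVert k, by omega, by omega⟩

/-- `u` lies in the branch of `G` at `v` through the neighbour `w` of `v`. The branch is described
by distances, which in a tree agrees with being in the component of `w` in `G - v`. -/
def InBranch (G : SimpleGraph V) (v w u : V) : Prop :=
  G.Adj v w ∧ G.dist v u = G.dist w u + 1

lemma exists_inBranch (hG : G.Connected) (hu : u ≠ v) : ∃ w, InBranch G v w u := by
  obtain ⟨w, hw, hadd⟩ :=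
    exists_dist_eq_and_dist_add_dist_eq (k := 1) hG (hG.pos_dist_of_ne hu.symm)
  exact ⟨w, SimpleGraph.dist_eq_one_iff_adj.1 hw, by omega⟩

namespace InBranch

lemma ne (h : InBranch G v w u) : u ≠ v := by
  rintro rfl
  simpa using h.2

lemma unique (hG : G.IsTree) (h : InBranch G v w u) (h' : InBranch G v w' u) : w = w' := by
  obtain ⟨p, hp⟩ := hG.connected.exists_walk_length_eq_dist w u
  obtain ⟨q, hq⟩ := hG.connected.exists_walk_length_eq_dist w' u
  have hpath : (SimpleGraph.Walk.cons h.1 p).IsPath :=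
    SimpleGraph.Walk.isPath_of_length_eq_dist _ (by rw [SimpleGraph.Walk.length_cons, hp, h.2])
  have hpath' : (SimpleGraph.Walk.cons h'.1 q).IsPath :=
    SimpleGraph.Walk.isPath_of_length_eq_dist _ (by rw [SimpleGraph.Walk.length_cons, hq, h'.2])
  simpa using congrArg SimpleGraph.Walk.snd ((hG.existsUnique_path v u).unique hpath hpath')

lemma of_dist_add_dist_eq (hG : G.Connected) (h : InBranch G v w x)
    (hadd : G.dist v x + G.dist x u = G.dist v u) : InBranch G v w u := by
  refine ⟨h.1, ?_⟩
  have hvu := hG.dist_triangle (u := v) (v := w) (w := u)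
  have hwu := hG.dist_triangle (u := w) (v := x) (w := u)
  have hvx := h.2
  rw [SimpleGraph.dist_eq_one_iff_adj.2 h.1] at hvu
  omega

lemma of_between (hG : G.IsTree) (h : InBranch G v w u) (hx : x ≠ v)
    (hadd : G.dist v x + G.dist x u = G.dist v u) : InBranch G v w x := by
  obtain ⟨w', hw'⟩ := exists_inBranch hG.connected hx
  rwa [h.unique hG (hw'.of_dist_add_dist_eq hG.connected hadd)]

lemma of_adj (hG : G.IsTree) (h : InBranch G v w u) (hux : G.Adj u x) (hx : x ≠ v) :
    InBranch G v w x := by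
  have hone := SimpleGraph.dist_eq_one_iff_adj.2 hux
  rcases hG.dist_eq_dist_add_one_of_adj v hux with hd | hd
  · exact h.of_between hG hx (by rw [SimpleGraph.dist_comm (u := x), hone, hd])
  · exact h.of_dist_add_dist_eq hG.connected (by rw [hone, hd])

lemma dist_add_dist_le_length (hG : G.IsTree) (p : G.Walk u y) (hu : InBranch G v w u)
    (hy : ¬ InBranch G v w y) : G.dist v u + G.dist v y ≤ p.length := by
  induction p with
  | nil => exact absurd hu hy
  | @cons u x y hux p ih =>
    rw [SimpleGraph.Walk.length_cons]
    by_cases hx : x = v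
    · subst hx
      have := SimpleGraph.dist_le p
      rw [SimpleGraph.dist_eq_one_iff_adj.2 hux.symm]
      omega
    · have := ih (hu.of_adj hG hux hx) hy
      have := hG.dist_eq_dist_add_one_of_adj v hux
      omega

lemma dist_eq_add (hG : G.IsTree) (hu : InBranch G v w u) (hy : ¬ InBranch G v w y) :
    G.dist u y = G.dist v u + G.dist v y := by
  obtain ⟨p, hp⟩ := hG.connected.exists_walk_length_eq_dist u y
  have hle := dist_add_dist_le_length hG p hu hy
  have htri := hG.connected.dist_triangle (u := u) (v := v) (w := y)
  rw [SimpleGraph.dist_comm (u := u) (v := v)] at htri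
  omega

lemma eq_of_dist_eq [G.LocallyFinite] (hG : G.IsTree) (hdeg : ∀ u, u ≠ v → G.degree u ≤ 2)
    (hx : InBranch G v w x) (hy : InBranch G v w y) (hxy : G.dist v x = G.dist v y) : x = y := by
  classical
  obtain ⟨k, hk⟩ : ∃ k, G.dist v x = k + 1 := ⟨_, hx.2⟩
  induction k generalizing x y with
  | zero =>
    have hwx : w = x := hG.connected.dist_eq_zero_iff.1 (by have := hx.2; omega)
    have hwy : w = y := hG.connected.dist_eq_zero_iff.1 (by have := hy.2; omega)
    exact hwx.symm.trans hwy
  | succ k ih =>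
    obtain ⟨px, hpx, hpx_add⟩ :=
      exists_dist_eq_and_dist_add_dist_eq (u := v) (v := x) (k := k + 1) hG.connected (by omega)
    obtain ⟨py, hpy, hpy_add⟩ :=
      exists_dist_eq_and_dist_add_dist_eq (u := v) (v := y) (k := k + 1) hG.connected (by omega)
    have ne_head {z : V} (hz : G.dist v z = k + 1) : z ≠ v := by
      rintro rfl
      simp at hz
    obtain rfl : px = py := ih (hx.of_between hG (ne_head hpx) hpx_add)
      (hy.of_between hG (ne_head hpy) hpy_add) (hpx.trans hpy.symm) hpx
    obtain ⟨q, hq, hq_add⟩ :=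
      exists_dist_eq_and_dist_add_dist_eq (u := v) (v := px) (k := k) hG.connected (by omega)
    -- Otherwise the parent `px` of `x` and `y` has the three neighbours `x`, `y` and `q`.
    by_contra hne
    refine (hdeg px (ne_head hpx)).not_gt ?_
    rw [← SimpleGraph.card_neighborFinset_eq_degree, two_lt_card]
    simp only [SimpleGraph.mem_neighborFinset, ← SimpleGraph.dist_eq_one_iff_adj]
    refine ⟨x, by omega, y, by omega, q, ?_, hne, ?_, ?_⟩
    · rw [SimpleGraph.dist_comm]; omega
    · rintro rfl; omega
    · rintro rfl; omega

lemma dist_add_dist_eq [G.LocallyFinite] (hG : G.IsTree) (hdeg : ∀ u, u ≠ v → G.degree u ≤ 2)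
    (hx : InBranch G v w x) (hy : InBranch G v w y) (hxy : G.dist v x ≤ G.dist v y) :
    G.dist v x + G.dist x y = G.dist v y := by
  obtain ⟨z, hz, hadd⟩ := exists_dist_eq_and_dist_add_dist_eq hG.connected hxy
  have hzv : z ≠ v := by
    rintro rfl
    exact hx.ne (hG.connected.dist_eq_zero_iff.1 (by rw [← hz, SimpleGraph.dist_self])).symm
  rwa [← (hy.of_between hG hzv hadd).eq_of_dist_eq hG hdeg hx hz]

lemma exists_farthest [Finite V] (hw : G.Adj v w) :
    ∃ m, InBranch G v w m ∧ ∀ u, InBranch G v w u → G.dist v u ≤ G.dist v m := by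
  have hne : {u | InBranch G v w u}.Nonempty :=
    ⟨w, hw, by rw [SimpleGraph.dist_self, SimpleGraph.dist_eq_one_iff_adj.2 hw]⟩
  exact Set.exists_max_image _ (G.dist v) (Set.toFinite _) hne

lemma exists_leg [Finite V] (hG : G.IsTree) (hw : G.Adj v w) :
    ∃ (l : ℕ) (e : ℕ → V), (∀ k ≤ l, G.dist v (e k) = k) ∧
      (∀ k ≤ l, k ≠ 0 → InBranch G v w (e k)) ∧ ∀ u, InBranch G v w u → G.dist v u ≤ l := by
  obtain ⟨m, hm, hmax⟩ := exists_farthest hw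
  have hpoint (k : ℕ) : ∃ x, k ≤ G.dist v m →
      G.dist v x = k ∧ G.dist v x + G.dist x m = G.dist v m := by
    by_cases hk : k ≤ G.dist v m
    · obtain ⟨x, hx⟩ := exists_dist_eq_and_dist_add_dist_eq hG.connected hk
      exact ⟨x, fun _ ↦ hx⟩
    · exact ⟨v, fun h ↦ absurd h hk⟩
  choose e he using hpoint
  refine ⟨G.dist v m, e, fun k hk ↦ (he k hk).1, fun k hk hk₀ ↦ ?_, hmax⟩
  refine hm.of_between hG (fun h ↦ hk₀ ?_) (he k hk).2
  rw [← (he k hk).1, h, SimpleGraph.dist_self]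

end InBranch

end Branch

/-- `e` parametrizes a spider with head `v` by its legs: `e i k` is the vertex at distance `k` from
`v` on the `i`-th leg, which has `len i` vertices other than `v`. Only the values with `k ≤ len i`
are meaningful; `e i 0` is the head for every `i`. -/
structure IsSpiderChart {V ι : Type*} (G : SimpleGraph V) (v : V) (len : ι → ℕ)
    (e : ι → ℕ → V) : Prop where
  dist_same_leg : ∀ i j k, j ≤ k → k ≤ len i → G.dist (e i j) (e i k) = k - j
  dist_of_ne : ∀ i i', i ≠ i' → ∀ j ≤ len i, ∀ k ≤ len i', G.dist (e i j) (e i' k) = j + k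
  exists_eq : ∀ u, u ≠ v → ∃ i, ∃ k ∈ Icc 1 (len i), e i k = u

lemma exists_isSpiderChart_neighborSet {V : Type*} [Finite V] {G : SimpleGraph V}
    [G.LocallyFinite] {v : V} (hG : G.IsTree) (hdeg : ∀ u, u ≠ v → G.degree u ≤ 2) :
    ∃ len e, IsSpiderChart (ι := G.neighborSet v) G v len e := by
  choose len e depth branch hlen using fun w : G.neighborSet v ↦ InBranch.exists_leg hG w.2
  have head (w) : e w 0 = v :=
    (hG.connected.dist_eq_zero_iff.1 (depth w 0 (Nat.zero_le _))).symm
  refine ⟨len, e, fun w j k hjk hk ↦ ?_, fun w w' hww' j hj k hk ↦ ?_, fun u hu ↦ ?_⟩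
  · obtain rfl | hj₀ := eq_or_ne j 0
    · rw [head, depth w k hk, Nat.sub_zero]
    · have hj := hjk.trans hk
      have h := (branch w j hj hj₀).dist_add_dist_eq hG hdeg (branch w k hk (by omega))
        (by rwa [depth w j hj, depth w k hk])
      rw [depth w j hj, depth w k hk] at h
      omega
  · obtain rfl | hj₀ := eq_or_ne j 0
    · rw [head, depth w' k hk, zero_add]
    · rw [(branch w j hj hj₀).dist_eq_add hG, depth w j hj, depth w' k hk]
      intro h
      obtain rfl | hk₀ := eq_or_ne k 0
      · exact h.ne (head w')
      · exact hww' (Subtype.ext (h.unique hG (branch w' k hk hk₀)))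
  · obtain ⟨w, hw⟩ := exists_inBranch hG.connected hu
    let w' : G.neighborSet v := ⟨w, hw.1⟩
    have hle : G.dist v u ≤ len w' := hlen w' u hw
    have hpos := hG.connected.pos_dist_of_ne hu.symm
    exact ⟨w', _, mem_Icc.2 ⟨hpos, hle⟩,
      (branch w' _ hle hpos.ne').eq_of_dist_eq hG hdeg hw (depth w' _ hle)⟩

/-- The path formed by legs `i` and `j` through the head, indexed by the integers: nonnegative
positions lie on leg `i`, negative ones on leg `j`. -/
def legLine {V ι : Type*} (e : ι → ℕ → V) (i j : ι) (z : ℤ) : V :=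
  if 0 ≤ z then e i z.toNat else e j (-z).toNat

namespace IsSpiderChart

variable {V ι κ : Type*} {G : SimpleGraph V} {v : V} {len : ι → ℕ} {e : ι → ℕ → V} {i j k : ι}

lemma comp_equiv (h : IsSpiderChart G v len e) (σ : κ ≃ ι) :
    IsSpiderChart G v (len ∘ σ) (e ∘ σ) where
  dist_same_leg i := h.dist_same_leg (σ i)
  dist_of_ne i i' hi := h.dist_of_ne (σ i) (σ i') (σ.injective.ne hi)
  exists_eq u hu := by
    obtain ⟨i, hi⟩ := h.exists_eq u hu
    exact ⟨σ.symm i, by simpa using hi⟩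

lemma card_le [Fintype V] [Fintype ι] (h : IsSpiderChart G v len e) :
    Fintype.card V ≤ ∑ i, len i + 1 := by
  classical
  have hcover : (univ : Finset V) ⊆
      insert v (univ.biUnion fun i ↦ (Icc 1 (len i)).image (e i)) := by
    intro u _
    obtain rfl | hu := eq_or_ne u v
    · exact mem_insert_self _ _
    · simpa using Or.inr (h.exists_eq u hu)
  calc Fintype.card V
      ≤ #(univ.biUnion fun i ↦ (Icc 1 (len i)).image (e i)) + 1 :=
        (card_le_card hcover).trans (card_insert_le _ _)
    _ ≤ ∑ i, #((Icc 1 (len i)).image (e i)) + 1 := by gcongr; exact card_biUnion_le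
    _ ≤ ∑ i, len i + 1 := by
      gcongr with i
      exact card_image_le.trans (by rw [Nat.card_Icc, Nat.add_sub_cancel])

lemma isGeodesicOn_legLine (h : IsSpiderChart G v len e) (hij : i ≠ j) :
    IsGeodesicOn G (legLine e i j) (Set.Icc (-len j) (len i)) := by
  suffices hle : ∀ x ∈ Set.Icc (-len j : ℤ) (len i), ∀ y ∈ Set.Icc (-len j : ℤ) (len i), x ≤ y →
      (G.dist (legLine e i j x) (legLine e i j y) : ℤ) = y - x by
    intro x hx y hy
    rcases le_total x y with hxy | hxy
    · rw [hle x hx y hy hxy, abs_sub_comm, abs_of_nonneg (sub_nonneg.2 hxy)]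
    · rw [SimpleGraph.dist_comm, hle y hy x hx hxy, abs_of_nonneg (sub_nonneg.2 hxy)]
  intro x hx y hy hxy
  rw [Set.mem_Icc] at hx hy
  unfold legLine
  split_ifs
  · rw [h.dist_same_leg i _ _ (by omega) (by omega)]; omega
  · omega
  · rw [h.dist_of_ne j i hij.symm _ (by omega) _ (by omega)]; omega
  · rw [SimpleGraph.dist_comm, h.dist_same_leg j _ _ (by omega) (by omega)]; omega

lemma eq_of_legLine_eq_legLine (h : IsSpiderChart G v len e) (hij : i ≠ j) (hik : i ≠ k)
    (hjk : j ≠ k) {x y : ℤ} (hx : x ∈ Set.Icc (-len j : ℤ) (len i))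
    (hy : y ∈ Set.Icc (-len k : ℤ) (len i)) (hxy : legLine e i j x = legLine e i k y) :
    0 ≤ x ∧ x = y := by
  have hdist : G.dist (legLine e i j x) (legLine e i k y) = 0 := by
    rw [hxy, SimpleGraph.dist_self]
  rw [Set.mem_Icc] at hx hy
  by_cases hx₀ : 0 ≤ x <;> by_cases hy₀ : 0 ≤ y
  · have hxy' : legLine e i j x = legLine e i j y := by
      rw [hxy, legLine, legLine, if_pos hy₀, if_pos hy₀]
    exact ⟨hx₀, (h.isGeodesicOn_legLine hij).injOn ⟨by omega, by omega⟩ ⟨by omega, by omega⟩ hxy'⟩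
  · rw [legLine, legLine, if_pos hx₀, if_neg hy₀, h.dist_of_ne i k hik _ (by omega) _ (by omega)]
      at hdist
    omega
  · rw [legLine, legLine, if_neg hx₀, if_pos hy₀,
      h.dist_of_ne j i hij.symm _ (by omega) _ (by omega)] at hdist
    omega
  · rw [legLine, legLine, if_neg hx₀, if_neg hy₀, h.dist_of_ne j k hjk _ (by omega) _ (by omega)]
      at hdist
    omega

lemma add_le_two_mul_homNumber [Finite V] (h : IsSpiderChart G v len e) (hij : i ≠ j) :
    len i + len j ≤ 2 * homNumber G := by
  have := (h.isGeodesicOn_legLine hij).sub_le_two_mul_homNumber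
  omega

end IsSpiderChart

lemma odd_add_ediv_self_iff {d : ℤ} (hd : d ≠ 0) (x : ℤ) :
    Odd ((x + d) / d) ↔ ¬ Odd (x / d) := by
  rw [Int.add_ediv_of_dvd_right dvd_rfl, Int.ediv_self hd, ← Int.not_even_iff_odd,
    Int.even_add_one, ← Int.not_even_iff_odd]

lemma le_add_two_mul_card_filter_odd_ediv {d : ℤ} (hd : 0 < d) (N : ℤ) :
    N ≤ d + 2 * #{x ∈ Ico 0 N | Odd (x / d)} := by
  set A := {x ∈ Ico 0 N | Odd (x / d)} with hA
  have heven : {x ∈ Ico 0 N | ¬ Odd (x / d)} ⊆ Ico 0 d ∪ A.image (· + d) := by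
    intro x hx
    rw [mem_filter, mem_Ico] at hx
    rw [mem_union, mem_Ico, mem_image]
    by_cases hxd : x < d
    · exact Or.inl ⟨hx.1.1, hxd⟩
    · refine Or.inr ⟨x - d, ?_, sub_add_cancel x d⟩
      rw [hA, mem_filter, mem_Ico]
      refine ⟨by omega, not_not.1 ?_⟩
      rw [← odd_add_ediv_self_iff hd.ne', sub_add_cancel]
      exact hx.2
  have hcard_even : #{x ∈ Ico 0 N | ¬ Odd (x / d)} ≤ d.toNat + #A :=
    calc #{x ∈ Ico 0 N | ¬ Odd (x / d)}
        ≤ #(Ico 0 d) + #(A.image (· + d)) :=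
          (card_le_card heven).trans (card_union_le _ _)
      _ ≤ d.toNat + #A := by rw [Int.card_Ico, sub_zero]; exact Nat.add_le_add_left card_image_le _
  have hsplit := card_filter_add_card_filter_not (s := Ico 0 N) fun x ↦ Odd (x / d)
  rw [Int.card_Ico, ← hA] at hsplit
  omega

namespace IsSpiderChart

variable {V ι : Type*} [Finite V] {G : SimpleGraph V} {v : V} {len : ι → ℕ} {e : ι → ℕ → V}

-- Leg `j` together with every other block of length `d` on leg `i` is slid by `d` towards the tip
-- of leg `i`, leg `k` replacing leg `j` on the far side of the head. Each chosen block lands on an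
-- omitted one, and whatever crosses the head lands on the omitted first block.
lemma two_mul_add_le_of_slide (h : IsSpiderChart G v len e) {i j k : ι} (hij : i ≠ j)
    (hik : i ≠ k) (hjk : j ≠ k) {d : ℕ} (hd : 0 < d) (hdi : d ≤ len i + 1)
    (hdj : len j ≤ len k + d) : 2 * len j + len i + 1 ≤ 2 * homNumber G + 2 * d := by
  have hd' : (0 : ℤ) < d := by omega
  set N : ℤ := len i + 1 - d
  set A : Finset ℤ := {x ∈ Ico 0 N | Odd (x / d)} with hA
  set X : Finset ℤ := Ico (-len j : ℤ) 0 ∪ A with hX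
  have mem_X {x : ℤ} (hx : x ∈ X) :
      -(len j : ℤ) ≤ x ∧ x < N ∧ (0 ≤ x → Odd (x / d)) := by
    simp only [hX, hA, mem_union, mem_Ico, mem_filter] at hx
    rcases hx with hx | ⟨hx, hodd⟩
    · exact ⟨hx.1, by omega, by omega⟩
    · exact ⟨by omega, hx.2, fun _ ↦ hodd⟩
  have hX_line : ∀ x ∈ X, x ∈ Set.Icc (-len j : ℤ) (len i) := fun x hx ↦ by
    have := mem_X hx
    exact ⟨by omega, by omega⟩
  have hX_slide : ∀ x ∈ X, x + d ∈ Set.Icc (-len k : ℤ) (len i) := fun x hx ↦ by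
    have := mem_X hx
    exact ⟨by omega, by omega⟩
  have hdisj : ∀ x ∈ X, ∀ y ∈ X, legLine e i j x ≠ legLine e i k (y + d) := by
    intro x hx y hy hxy
    obtain ⟨hx₀, rfl⟩ :=
      h.eq_of_legLine_eq_legLine hij hik hjk (hX_line x hx) (hX_slide y hy) hxy
    have hodd : Odd ((y + d) / d) := (mem_X hx).2.2 hx₀
    have hy₀ : 0 ≤ y := by
      by_contra hneg
      rw [Int.ediv_eq_zero_of_lt hx₀ (by omega)] at hodd
      exact absurd hodd (by decide)
    exact (odd_add_ediv_self_iff hd'.ne' y).1 hodd ((mem_X hy).2.2 hy₀)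
  have hcard : #X ≤ homNumber G :=
    ((h.isGeodesicOn_legLine hij).mono hX_line).card_le_homNumber
      (((h.isGeodesicOn_legLine hik).comp_add_right d).mono hX_slide) hdisj
  have hdisj_union : Disjoint (Ico (-len j : ℤ) 0) A :=
    (Ico_disjoint_Ico_consecutive _ 0 N).mono_right (filter_subset _ _)
  rw [hX, card_union_of_disjoint hdisj_union, Int.card_Ico] at hcard
  have hblocks : N ≤ d + 2 * #A :=
    le_add_two_mul_card_filter_odd_ediv hd' N
  omega

lemma five_mul_sum_len_add_one_le_of_monotone {len : Fin 3 → ℕ} {e : Fin 3 → ℕ → V}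
    (h : IsSpiderChart G v len e) (hlen : Monotone len) :
    5 * (∑ i, len i + 1) ≤ 12 * homNumber G + 12 := by
  have h₀₁ : len 0 ≤ len 1 := hlen (by decide)
  have h₁₂ : len 1 ≤ len 2 := hlen (by decide)
  rw [Fin.sum_univ_three]
  by_cases hpath : len 0 ≤ min (len 1 - len 0) (len 2 - len 1)
  · have := h.add_le_two_mul_homNumber (i := 1) (j := 2) (by decide)
    omega
  rcases le_total (len 2 - len 1) (len 1 - len 0) with hgap | hgap
  · have := h.two_mul_add_le_of_slide (i := 0) (j := 2) (k := 1) (by decide) (by decide)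
      (by decide) (d := max 1 (len 2 - len 1)) (by omega) (by omega) (by omega)
    omega
  · have := h.two_mul_add_le_of_slide (i := 2) (j := 1) (k := 0) (by decide) (by decide)
      (by decide) (d := max 1 (len 1 - len 0)) (by omega) (by omega) (by omega)
    omega

lemma five_mul_sum_len_add_one_le {len : Fin 3 → ℕ} {e : Fin 3 → ℕ → V}
    (h : IsSpiderChart G v len e) :
    5 * (∑ i, len i + 1) ≤ 12 * homNumber G + 12 := by
  rw [← Equiv.sum_comp (Tuple.sort len) len]
  exact (h.comp_equiv (Tuple.sort len)).five_mul_sum_len_add_one_le_of_monotone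
    (Tuple.monotone_sort len)

end IsSpiderChart

lemma IsSpider.exists_isSpiderChart {V : Type*} [Fintype V] {G : SimpleGraph V}
    [DecidableRel G.Adj] {v : V} {k : ℕ} (h : IsSpider G v k) :
    ∃ len e, IsSpiderChart (ι := Fin k) G v len e := by
  obtain ⟨hG, hv, hdeg⟩ := h
  obtain ⟨len, e, hchart⟩ := exists_isSpiderChart_neighborSet hG hdeg
  rw [← SimpleGraph.card_neighborSet_eq_degree] at hv
  exact ⟨_, _, hchart.comp_equiv (Fintype.equivFinOfCardEq hv).symm⟩

/-- For every spider `T` on `n` vertices with exactly `3` legs, `h(T) ≥ 5n/12 − 1`. -/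
theorem stmt8 {V : Type*} [Fintype V] (G : SimpleGraph V) [DecidableRel G.Adj] (v : V)
    (hS : IsSpider G v 3) (n : ℕ) (hn : Fintype.card V = n) :
    5 * (n : ℝ) / 12 - 1 ≤ homNumber G := by
  obtain ⟨len, e, hchart⟩ := hS.exists_isSpiderChart
  have hcard : n ≤ ∑ i, len i + 1 := hn ▸ hchart.card_le
  have hbound : 5 * n ≤ 12 * homNumber G + 12 :=
    (Nat.mul_le_mul_left 5 hcard).trans hchart.five_mul_sum_len_add_one_le
  have hbound' : 5 * (n : ℝ) ≤ 12 * homNumber G + 12 := by exact_mod_cast hbound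
  linarith
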